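/- Let F_s be a positional scoring rule with s_1 ≠ s_2, and assume n is even and n ≥ 2s_2/(1 − s_2). Define, for ℓ ∈ {1, …, m−1}: L_s(1) = 1/(s_1 − s_2) − 1, and for ℓ ≥ 2, L_s(ℓ) = min( 1/(s_ℓ − s_{ℓ+1}) − 1 , min over t ∈ {1, …, ℓ̄} of ⌊((n−2)(s̄↑_2 − s_{m−t+1}) + 1 − s_{m−t})/(s_t − s_{ℓ+1})⌋ ), where 1/(s_ℓ − s_{ℓ+1}) is interpreted as ∞ when s_ℓ = s_{ℓ+1}. Then Φ(F_s) ≥ max over ℓ ∈ {1, …, m−1} of L_s(ℓ); moreover F_s is not k-augmentation strategyproof for any k < max_ℓ L_s(ℓ). -/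

import Mathlib

open Finset

/-- A strict linear preference order over `m` candidates, encoded as the permutation sending
each candidate to its rank; rank `0` is the most preferred position, so
`c ≻ c'` iff `p c < p c'`. -/
abbrev Pref (m : ℕ) := Equiv.Perm (Fin m)

/-- A profile of `N` voters, each with a strict preference over `m` candidates. -/
abbrev Profile (m N : ℕ) := Fin N → Pref m

/-- A social choice correspondence: for each number `N` of voters, it maps each `N`-voter
profile to a set of (tied) winners. -/
abbrev SCC (m : ℕ) := (N : ℕ) → Profile m N → Finset (Fin m)

/-- The profile `P` with `k` extra copies of voter `i`'s preference appended. -/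
def addCopies {m n : ℕ} (P : Profile m n) (i : Fin n) (k : ℕ) : Profile m (n + k) :=
  fun j => if h : (j : ℕ) < n then P ⟨j, h⟩ else P i

/-- Break a tie among the candidates in `A` using the linear tie-breaking order `τ`:
the winner is the `τ`-maximal (lowest `τ`-rank) element of `A`. -/
noncomputable def tiebreak {m : ℕ} [NeZero m] (τ : Pref m) (A : Finset (Fin m)) : Fin m :=
  if h : A.Nonempty then τ.symm ((A.image (fun c => τ c)).min' (h.image _)) else 0

/-- `F` is `k`-augmentation strategyproof on `n`-voter profiles: for every tie-breaker `τ`,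
profile `P`, voter `i`, and alternative preference `q`, voter `i` weakly prefers the outcome
obtained by adding `k` truthful copies of her vote to the outcome of the manipulation `q`. -/
def kASP (m n : ℕ) [NeZero m] (F : SCC m) (k : ℕ) : Prop :=
  ∀ (τ : Pref m) (P : Profile m n) (i : Fin n) (q : Pref m),
    (P i) (tiebreak τ (F (n + k) (addCopies P i k))) ≤
      (P i) (tiebreak τ (F n (Function.update P i q)))

/-- The manipulation potential of `F` on `n`-voter profiles: the least `k` such that `F` is
`k'`-augmentation strategyproof for all `k' ≥ k`, and `⊤` (i.e. `∞`) if no such `k` exists. -/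
noncomputable def manipPot (m n : ℕ) [NeZero m] (F : SCC m) : ℕ∞ :=
  sInf ((fun k : ℕ => (k : ℕ∞)) '' {k : ℕ | ∀ k' : ℕ, k ≤ k' → kASP m n F k'})

/-- Total score of candidate `c` under the (1-indexed) scoring vector `s`:
a voter ranking `c` in position `ℓ ∈ {1, …, m}` contributes `s ℓ` points. -/
noncomputable def posScore {m N : ℕ} (s : ℕ → ℝ) (P : Profile m N) (c : Fin m) : ℝ :=
  ∑ i : Fin N, s ((P i c : ℕ) + 1)

/-- The positional scoring rule with scoring vector `s`: candidates with maximal score win. -/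
noncomputable def posRule (m : ℕ) (s : ℕ → ℝ) : SCC m := fun _ P =>
  Finset.univ.filter (fun c => ∀ c', posScore s P c' ≤ posScore s P c)

/-- `s̄↑_ℓ`: the average of the top `ℓ` scores. -/
noncomputable def upave (s : ℕ → ℝ) (ℓ : ℕ) : ℝ := (∑ j ∈ Finset.Icc 1 ℓ, s j) / (ℓ : ℝ)

/-- `s̄↓_ℓ`: the average of the bottom `ℓ` scores (out of `m`). -/
noncomputable def downave (s : ℕ → ℝ) (m ℓ : ℕ) : ℝ :=
  (∑ j ∈ Finset.Icc (m - ℓ + 1) m, s j) / (ℓ : ℝ)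

/-- `ℓ̄ = max {ℓ' ∈ {1, …, ℓ−1} : s_{ℓ'} > s_{ℓ+1}}`. -/
noncomputable def lbar (s : ℕ → ℝ) (ℓ : ℕ) : ℕ :=
  ((Finset.Icc 1 (ℓ - 1)).filter (fun t => s (ℓ + 1) < s t)).sup id

/-- The lower-bound quantity `L_s(ℓ)`; when `s ℓ = s (ℓ+1)` the term `1/(s_ℓ − s_{ℓ+1}) − 1`
is interpreted as `∞`, so the `min` reduces to its second argument. -/
noncomputable def Lval (s : ℕ → ℝ) (n m ℓ : ℕ) : ℝ :=
  if ℓ = 1 then 1 / (s 1 - s 2) - 1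
  else
    let innerMin : ℝ :=
      if h : (Finset.Icc 1 (lbar s ℓ)).Nonempty then
        (Finset.Icc 1 (lbar s ℓ)).inf' h (fun t =>
          ((⌊(((n : ℝ) - 2) * (upave s 2 - s (m - t + 1)) + 1 - s (m - t)) /
              (s t - s (ℓ + 1))⌋ : ℤ) : ℝ))
      else 0
    if s ℓ = s (ℓ + 1) then innerMin
    else min (1 / (s ℓ - s (ℓ + 1)) - 1) innerMin

/-!
For candidates `a < b`, voter `0` ranks the candidates in the order `0, 1, …, m - 1`, voter `1`
ranks `b` first and `a` last, and the other voters split evenly between `a ≻ b ≻ ⋯` and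
`b ≻ a ≻ ⋯`, all of them ranking the remaining candidates in reverse order. If voter `0` lifts `a`
to the top and buries `b`, then `a` and `b` tie, the bound on `n` keeps every other candidate from
overtaking them, and the tie-breaker `a ≻ b ≻ ⋯` elects `a`.
If she instead adds `k` truthful copies, `b` still beats `a`, because the `k + 1` truthful votes do
not make up for voter `1`, and no candidate she prefers to `a` overtakes `b`, because the reversal
puts those candidates at the bottom of every other vote. Hence she prefers manipulating.
When `a` and `b` are in positions `ℓ` and `ℓ + 1` of her preference, these two comparisons are the
two terms of `L_s(ℓ)`.
-/

section Winners

variable {m : ℕ}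

lemma mem_posRule {N : ℕ} {s : ℕ → ℝ} {P : Profile m N} {c : Fin m} :
    c ∈ posRule m s N P ↔ ∀ c', posScore s P c' ≤ posScore s P c := by
  simp only [posRule, mem_filter_univ]

lemma posRule_nonempty {N : ℕ} [NeZero m] (s : ℕ → ℝ) (P : Profile m N) :
    (posRule m s N P).Nonempty :=
  (Finite.exists_max (posScore s P)).imp fun _ hc => mem_posRule.mpr hc

lemma tiebreak_mem [NeZero m] (τ : Pref m) {A : Finset (Fin m)} (hA : A.Nonempty) :
    tiebreak τ A ∈ A := by
  obtain ⟨c, hc, hc'⟩ := mem_image.mp ((A.image fun c => τ c).min'_mem (hA.image _))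
  rwa [tiebreak, dif_pos hA, ← hc', Equiv.symm_apply_apply]

lemma tiebreak_le [NeZero m] (τ : Pref m) {A : Finset (Fin m)} {c : Fin m} (hc : c ∈ A) :
    τ (tiebreak τ A) ≤ τ c := by
  rw [tiebreak, dif_pos ⟨c, hc⟩, Equiv.apply_symm_apply]
  exact min'_le _ _ (mem_image_of_mem _ hc)

lemma tiebreak_posRule_ne_of_posScore_lt {N : ℕ} [NeZero m] (τ : Pref m) {s : ℕ → ℝ}
    {P : Profile m N} {b c : Fin m} (h : posScore s P c < posScore s P b) :
    tiebreak τ (posRule m s N P) ≠ c := by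
  rintro rfl
  exact h.not_ge (mem_posRule.mp (tiebreak_mem τ (posRule_nonempty s P)) b)

lemma tiebreak_posRule_ne_of_posScore_le {N : ℕ} [NeZero m] {τ : Pref m} {s : ℕ → ℝ}
    {P : Profile m N} {b c : Fin m} (h : posScore s P c ≤ posScore s P b) (hτ : τ b < τ c) :
    tiebreak τ (posRule m s N P) ≠ c := by
  rintro rfl
  have hwin := mem_posRule.mp (tiebreak_mem τ (posRule_nonempty s P))
  exact hτ.not_ge (tiebreak_le τ (mem_posRule.mpr fun c' => (hwin c').trans h))

lemma posScore_cons {N : ℕ} (s : ℕ → ℝ) (p : Pref m) (P : Profile m N) (c : Fin m) :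
    posScore s (Fin.cons p P : Profile m (N + 1)) c = s (p c + 1) + posScore s P c := by
  simp only [posScore, Fin.sum_univ_succ, Fin.cons_zero, Fin.cons_succ]

lemma posScore_append {M N : ℕ} (s : ℕ → ℝ) (P : Profile m M) (P' : Profile m N) (c : Fin m) :
    posScore s (Fin.append P P' : Profile m (M + N)) c = posScore s P c + posScore s P' c := by
  simp only [posScore, Fin.sum_univ_add, Fin.append_left, Fin.append_right]

lemma posScore_const (N : ℕ) (s : ℕ → ℝ) (p : Pref m) (c : Fin m) :
    posScore s (fun _ : Fin N => p) c = N * s (p c + 1) := by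
  simp only [posScore, sum_const, card_univ, Fintype.card_fin, nsmul_eq_mul]

lemma posScore_addCopies {n : ℕ} (s : ℕ → ℝ) (P : Profile m n) (i : Fin n) (k : ℕ) (c : Fin m) :
    posScore s (addCopies P i k) c = posScore s P c + k * s (P i c + 1) := by
  simp [posScore, Fin.sum_univ_add, addCopies]

lemma lt_manipPot_of_not_kASP {n k : ℕ} [NeZero m] {F : SCC m} (h : ¬ kASP m n F k) :
    (k : ℕ∞) < manipPot m n F := by
  have hle : ((k + 1 : ℕ) : ℕ∞) ≤ manipPot m n F := by
    refine le_sInf ?_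
    rintro _ ⟨K, hK, rfl⟩
    exact Nat.cast_le.mpr (Nat.succ_le_of_lt (lt_of_not_ge fun hKk => h (hK k hKk)))
  exact (Nat.cast_lt.mpr k.lt_succ_self).trans_le hle

end Winners

section Rankings

variable {m : ℕ}

/-- The preference obtained from `p` by lifting candidate `c` to the first position, keeping the
relative order of the other candidates. -/
def moveToTop (c : Fin m) (p : Pref m) : Pref m := p.trans (p c).cycleRange

lemma moveToTop_self (c : Fin m) (p : Pref m) : (moveToTop c p c : ℕ) = 0 := by
  simp [moveToTop, Fin.coe_cycleRange_of_le]

lemma moveToTop_ne_zero {c d : Fin m} (hdc : d ≠ c) (p : Pref m) :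
    (moveToTop c p d : ℕ) ≠ 0 := by
  rw [← moveToTop_self c p]
  exact Fin.val_ne_of_ne ((moveToTop c p).injective.ne hdc)

lemma moveToTop_le_add_one (c d : Fin m) (p : Pref m) : (moveToTop c p d : ℕ) ≤ p d + 1 := by
  rcases le_or_gt (p d) (p c) with h | h
  · rw [moveToTop, Equiv.trans_apply, Fin.coe_cycleRange_of_le h]
    split_ifs <;> omega
  · rw [moveToTop, Equiv.trans_apply, Fin.cycleRange_of_gt h]
    exact Nat.le_succ _

lemma le_moveToTop {c d : Fin m} (hdc : d ≠ c) (p : Pref m) : (p d : ℕ) ≤ moveToTop c p d := by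
  rcases le_or_gt (p d) (p c) with h | h
  · rw [moveToTop, Equiv.trans_apply, Fin.coe_cycleRange_of_le h, if_neg (p.injective.ne hdc)]
    exact Nat.le_succ _
  · rw [moveToTop, Equiv.trans_apply, Fin.cycleRange_of_gt h]

/-- The preference obtained from `p` by sinking candidate `c` to the last position, keeping the
relative order of the other candidates; this is `moveToTop` on the reversed preference. -/
def moveToBottom (c : Fin m) (p : Pref m) : Pref m :=
  (moveToTop c (p.trans Fin.revPerm)).trans Fin.revPerm

lemma moveToBottom_self (c : Fin m) (p : Pref m) : (moveToBottom c p c : ℕ) = m - 1 := by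
  simp only [moveToBottom, Equiv.trans_apply, Fin.revPerm_apply, Fin.val_rev, moveToTop_self,
    zero_add]

lemma le_moveToBottom_add_one (c d : Fin m) (p : Pref m) :
    (p d : ℕ) ≤ moveToBottom c p d + 1 := by
  have h := moveToTop_le_add_one c d (p.trans Fin.revPerm)
  simp only [moveToBottom, Equiv.trans_apply, Fin.revPerm_apply, Fin.val_rev] at h ⊢
  omega

/-- The preference `a ≻ b ≻ ⋯` with the remaining candidates in decreasing order. -/
def topTwo (a b : Fin m) : Pref m := moveToTop a (moveToTop b Fin.revPerm)

/-- The preference obtained from `p` by lifting `a` to the first position and sinking `b` to the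
last position. -/
def topBottom (a b : Fin m) (p : Pref m) : Pref m := moveToTop a (moveToBottom b p)

variable {a b c : Fin m}

lemma topTwo_fst (a b : Fin m) : (topTwo a b a : ℕ) = 0 := moveToTop_self _ _

lemma topTwo_snd (hab : a ≠ b) : (topTwo a b b : ℕ) = 1 := by
  have hpos : (topTwo a b b : ℕ) ≠ 0 := moveToTop_ne_zero hab.symm _
  have hle : (topTwo a b b : ℕ) ≤ _ := moveToTop_le_add_one a b (moveToTop b Fin.revPerm)
  rw [moveToTop_self] at hle
  omega

lemma rev_le_topTwo (hca : c ≠ a) (hcb : c ≠ b) : m - 1 - c ≤ (topTwo a b c : ℕ) := by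
  have h := (le_moveToTop hcb Fin.revPerm).trans (le_moveToTop hca _)
  rw [Fin.revPerm_apply, Fin.val_rev] at h
  exact (by omega : m - 1 - (c : ℕ) = m - (c + 1)).trans_le h

lemma topBottom_top (a b : Fin m) (p : Pref m) : (topBottom a b p a : ℕ) = 0 :=
  moveToTop_self _ _

lemma topBottom_bottom (hab : a ≠ b) (p : Pref m) : (topBottom a b p b : ℕ) = m - 1 := by
  have h : _ ≤ (topBottom a b p b : ℕ) := le_moveToTop hab.symm (moveToBottom b p)
  rw [moveToBottom_self] at h
  omega

lemma rev_le_topBottom_rev_add_one (hca : c ≠ a) :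
    m - 1 - c ≤ (topBottom a b Fin.revPerm c : ℕ) + 1 := by
  have h := (le_moveToBottom_add_one b c Fin.revPerm).trans
    (Nat.succ_le_succ (le_moveToTop hca _))
  rw [Fin.revPerm_apply, Fin.val_rev] at h
  exact (by omega : m - 1 - (c : ℕ) = m - (c + 1)).trans_le h

end Rankings

section Contest

variable {m : ℕ}

/-- The profile in which voter `0` has preference `p`, voter `1` ranks `b` first and `a` last, and
the other voters are `h` copies of `a ≻ b ≻ ⋯` and `h` copies of `b ≻ a ≻ ⋯`; all voters but
voter `0` rank the remaining candidates in decreasing order. -/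
def contestProfile (h : ℕ) (a b : Fin m) (p : Pref m) : Profile m (h + h + 2) :=
  Fin.cons p (Fin.cons (topBottom b a Fin.revPerm)
    (Fin.append (fun _ : Fin h => topTwo a b) (fun _ : Fin h => topTwo b a)))

variable {h : ℕ} {s : ℕ → ℝ} {a b c : Fin m} {p : Pref m}

lemma update_contestProfile (h : ℕ) (a b : Fin m) (p q : Pref m) :
    Function.update (contestProfile h a b p) 0 q = contestProfile h a b q :=
  Fin.update_cons_zero _ _ _

lemma posScore_contestProfile (h : ℕ) (s : ℕ → ℝ) (a b : Fin m) (p : Pref m) (c : Fin m) :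
    posScore s (contestProfile h a b p) c = s (p c + 1) + s (topBottom b a Fin.revPerm c + 1) +
      h * (s (topTwo a b c + 1) + s (topTwo b a c + 1)) := by
  rw [contestProfile, posScore_cons, posScore_cons, posScore_append, posScore_const,
    posScore_const]
  ring

lemma posScore_contestProfile_left (h : ℕ) (s : ℕ → ℝ) (hab : a ≠ b) (p : Pref m) :
    posScore s (contestProfile h a b p) a = s (p a + 1) + s m + h * (s 1 + s 2) := by
  rw [posScore_contestProfile, topBottom_bottom hab.symm, topTwo_fst, topTwo_snd hab.symm,
    Nat.sub_add_cancel a.pos]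

lemma posScore_contestProfile_right (h : ℕ) (s : ℕ → ℝ) (hab : a ≠ b) (p : Pref m) :
    posScore s (contestProfile h a b p) b = s (p b + 1) + s 1 + h * (s 1 + s 2) := by
  rw [posScore_contestProfile, topBottom_top, topTwo_fst, topTwo_snd hab, add_comm (s (1 + 1))]

lemma score_le_of_le_rank (hs : AntitoneOn s (Set.Icc 1 m)) {r : ℕ} (hr : 1 ≤ r)
    (hrc : r ≤ (p c : ℕ) + 1) : s (p c + 1) ≤ s r :=
  hs ⟨hr, hrc.trans (p c).isLt⟩ ⟨Nat.le_add_left _ _, (p c).isLt⟩ hrc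

lemma score_moveToTop_le (hs : AntitoneOn s (Set.Icc 1 m)) (hca : c ≠ a) (p : Pref m) :
    s (moveToTop a p c + 1) ≤ s 2 :=
  score_le_of_le_rank hs one_le_two
    (Nat.succ_le_succ (Nat.one_le_iff_ne_zero.mpr (moveToTop_ne_zero hca p)))

lemma posScore_contestProfile_le_of_ne (hs : AntitoneOn s (Set.Icc 1 m)) (hca : c ≠ a)
    (hcb : c ≠ b) :
    posScore s (contestProfile h a b p) c ≤ s (p c + 1) + s 2 + h * (s 2 + s 2) := by
  rw [posScore_contestProfile]
  gcongr
  exacts [score_moveToTop_le hs hcb _, score_moveToTop_le hs hca _, score_moveToTop_le hs hcb _]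

lemma posScore_contestProfile_le_of_lt (hs : AntitoneOn s (Set.Icc 1 m)) (hca : c < a)
    (hcb : c < b) :
    posScore s (contestProfile h a b p) c ≤ s (p c + 1) + s (m - 1 - c) + h * (2 * s (m - c)) := by
  have score_topTwo_le {d e : Fin m} (hcd : c ≠ d) (hce : c ≠ e) :
      s (topTwo d e c + 1) ≤ s (m - c) :=
    score_le_of_le_rank hs (by omega) (by have := rev_le_topTwo hcd hce; omega)
  have score_topBottom_le : s (topBottom b a Fin.revPerm c + 1) ≤ s (m - 1 - c) :=
    score_le_of_le_rank hs (by omega) (rev_le_topBottom_rev_add_one hcb.ne)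
  rw [posScore_contestProfile, two_mul]
  gcongr
  exacts [score_topTwo_le hca.ne hcb.ne, score_topTwo_le hcb.ne hca.ne]

lemma left_mem_posRule_contestProfile (hs : AntitoneOn s (Set.Icc 1 m)) (hab : a ≠ b)
    (hbig : (h + 2) * s 2 ≤ (h + 1) * s 1 + s m) :
    a ∈ posRule m s _ (contestProfile h a b (topBottom a b p)) := by
  rw [mem_posRule, posScore_contestProfile_left h s hab, topBottom_top]
  intro c
  by_cases hca : c = a
  · rw [hca, posScore_contestProfile_left h s hab, topBottom_top]
  by_cases hcb : c = b
  · rw [hcb, posScore_contestProfile_right h s hab, topBottom_bottom hab,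
      Nat.sub_add_cancel a.pos, zero_add, add_comm (s m)]
  have hc : s (topBottom a b p c + 1) ≤ s 2 := score_moveToTop_le hs hca _
  calc posScore s (contestProfile h a b (topBottom a b p)) c
      ≤ s (topBottom a b p c + 1) + s 2 + h * (s 2 + s 2) :=
        posScore_contestProfile_le_of_ne hs hca hcb
    _ ≤ s (0 + 1) + s m + h * (s 1 + s 2) := by rw [zero_add]; linarith

lemma tiebreak_posRule_contestProfile_manipulated [NeZero m] (hs : AntitoneOn s (Set.Icc 1 m))
    (hab : a ≠ b) (hbig : (h + 2) * s 2 ≤ (h + 1) * s 1 + s m) :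
    tiebreak (topTwo a b) (posRule m s _ (contestProfile h a b (topBottom a b p))) = a := by
  have hle := tiebreak_le (topTwo a b) (left_mem_posRule_contestProfile (p := p) hs hab hbig)
  rw [Fin.le_def, topTwo_fst] at hle
  exact (topTwo a b).injective (Fin.ext ((Nat.le_zero.mp hle).trans (topTwo_fst a b).symm))

lemma posScore_addCopies_contestProfile (h k : ℕ) (s : ℕ → ℝ) (a b c : Fin m) (p : Pref m) :
    posScore s (addCopies (contestProfile h a b p) 0 k) c =
      posScore s (contestProfile h a b p) c + k * s (p c + 1) :=
  posScore_addCopies s _ 0 k c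

lemma lt_tiebreak_posRule_addCopies_contestProfile [NeZero m] {k : ℕ}
    (hs : AntitoneOn s (Set.Icc 1 m)) (hab : a < b)
    (hk : (k + 1) * (s (a + 1) - s (b + 1)) < s 1 - s m)
    (hlt : ∀ c < a, (k + 1) * (s (c + 1) - s (b + 1)) ≤
      h * (s 1 + s 2 - 2 * s (m - c)) + s 1 - s (m - 1 - c)) :
    a < tiebreak (topTwo a b)
      (posRule m s _ (addCopies (contestProfile h a b (Equiv.refl _)) 0 k)) := by
  refine lt_of_not_ge fun hle => ?_
  generalize hw : tiebreak (topTwo a b) _ = w at hle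
  have score_b : posScore s (addCopies (contestProfile h a b (Equiv.refl _)) 0 k) b =
      (k + 1) * s (b + 1) + s 1 + h * (s 1 + s 2) := by
    rw [posScore_addCopies_contestProfile, posScore_contestProfile_right h s hab.ne,
      Equiv.refl_apply]
    ring
  rcases hle.eq_or_lt with rfl | hwa
  · refine tiebreak_posRule_ne_of_posScore_lt (b := b) _ ?_ hw
    rw [score_b, posScore_addCopies_contestProfile, posScore_contestProfile_left h s hab.ne,
      Equiv.refl_apply]
    linarith
  · have hwb := hwa.trans hab
    refine tiebreak_posRule_ne_of_posScore_le (b := b) ?_ ?_ hw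
    · rw [score_b, posScore_addCopies_contestProfile]
      have hscore := posScore_contestProfile_le_of_lt (h := h) (p := Equiv.refl _) hs hwa hwb
      rw [Equiv.refl_apply] at hscore ⊢
      linarith [hlt w hwa]
    · have hrev := rev_le_topTwo hwa.ne hwb.ne
      rw [Fin.lt_def, topTwo_snd hab.ne]
      omega

-- The manipulator's preference is `Equiv.refl _`, which puts candidate `c` in position `c + 1`.
theorem not_kASP_posRule_of_lt [NeZero m] {k : ℕ} (hs : AntitoneOn s (Set.Icc 1 m)) (hab : a < b)
    (hbig : (h + 2) * s 2 ≤ (h + 1) * s 1 + s m)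
    (hk : (k + 1) * (s (a + 1) - s (b + 1)) < s 1 - s m)
    (hlt : ∀ c < a, (k + 1) * (s (c + 1) - s (b + 1)) ≤
      h * (s 1 + s 2 - 2 * s (m - c)) + s 1 - s (m - 1 - c)) :
    ¬ kASP m (h + h + 2) (posRule m s) k := by
  intro hASP
  have hle := hASP (topTwo a b) (contestProfile h a b (Equiv.refl _)) 0
    (topBottom a b (Equiv.refl _))
  rw [update_contestProfile, tiebreak_posRule_contestProfile_manipulated hs hab.ne hbig] at hle
  exact (lt_tiebreak_posRule_addCopies_contestProfile hs hab hk hlt).not_ge hle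

end Contest

section Thresholds

variable {s : ℕ → ℝ} {n m ℓ t : ℕ}

lemma upave_two (s : ℕ → ℝ) : upave s 2 = (s 1 + s 2) / 2 := by
  rw [upave, sum_Icc_succ_top one_le_two, Icc_self, sum_singleton, Nat.cast_ofNat]

lemma le_lbar (ht : 1 ≤ t) (htℓ : t < ℓ) (hst : s (ℓ + 1) < s t) : t ≤ lbar s ℓ :=
  le_sup (f := id) (mem_filter.mpr ⟨mem_Icc.mpr ⟨ht, Nat.le_sub_one_of_lt htℓ⟩, hst⟩)

lemma Lval_le_one_div_sub_one (hℓ : s ℓ ≠ s (ℓ + 1)) :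
    Lval s n m ℓ ≤ 1 / (s ℓ - s (ℓ + 1)) - 1 := by
  rw [Lval]
  split_ifs with h1
  · rw [h1]
  all_goals exact min_le_left _ _

lemma Lval_le_floor (ht : 1 ≤ t) (htℓ : t < ℓ) (hst : s (ℓ + 1) < s t) :
    Lval s n m ℓ ≤ (⌊(((n : ℝ) - 2) * (upave s 2 - s (m - t + 1)) + 1 - s (m - t)) /
      (s t - s (ℓ + 1))⌋ : ℤ) := by
  have htmem : t ∈ Icc 1 (lbar s ℓ) := mem_Icc.mpr ⟨ht, le_lbar ht htℓ hst⟩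
  rw [Lval, if_neg (ht.trans_lt htℓ).ne', dif_pos ⟨t, htmem⟩]
  have hinf := inf'_le (fun t => ((⌊(((n : ℝ) - 2) * (upave s 2 - s (m - t + 1)) + 1 -
    s (m - t)) / (s t - s (ℓ + 1))⌋ : ℤ) : ℝ)) htmem
  split_ifs
  exacts [hinf, (min_le_right _ _).trans hinf]

lemma add_one_mul_sub_lt_one_of_lt_Lval {x : ℝ} (hℓ : s (ℓ + 1) ≤ s ℓ) (hx : x < Lval s n m ℓ) :
    (x + 1) * (s ℓ - s (ℓ + 1)) < 1 := by
  rcases hℓ.eq_or_lt with heq | hlt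
  · simp only [heq, sub_self, mul_zero, zero_lt_one]
  · rw [← lt_div_iff₀ (sub_pos.mpr hlt), ← lt_sub_iff_add_lt]
    exact hx.trans_le (Lval_le_one_div_sub_one hlt.ne')

lemma add_one_mul_sub_le_of_lt_Lval {k : ℕ} (ht : 1 ≤ t) (htℓ : t < ℓ) (hst : s (ℓ + 1) < s t)
    (hk : k < Lval s n m ℓ) :
    (k + 1) * (s t - s (ℓ + 1)) ≤
      ((n : ℝ) - 2) * (upave s 2 - s (m - t + 1)) + 1 - s (m - t) := by
  have hfloor := hk.trans_le (Lval_le_floor ht htℓ hst)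
  rw [← Int.cast_natCast, Int.cast_lt, Int.lt_floor_iff, le_div_iff₀ (sub_pos.mpr hst),
    Int.cast_natCast] at hfloor
  exact hfloor

end Thresholds

theorem not_kASP_posRule_of_lt_Lval {m h k ℓ : ℕ} [NeZero m] {s : ℕ → ℝ} (hs1 : s 1 = 1)
    (hsm : s m = 0) (hs : AntitoneOn s (Set.Icc 1 m)) (hbig : (h + 2) * s 2 ≤ h + 1)
    (hℓ : 1 ≤ ℓ) (hℓm : ℓ < m) (hk : k < Lval s (h + h + 2) m ℓ) :
    ¬ kASP m (h + h + 2) (posRule m s) k := by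
  have hab : (⟨ℓ - 1, by omega⟩ : Fin m) < ⟨ℓ, hℓm⟩ := Fin.mk_lt_mk.mpr (by omega)
  refine not_kASP_posRule_of_lt hs hab (by rw [hs1, hsm]; linarith) ?_ fun c hc => ?_
  · rw [Nat.sub_add_cancel hℓ, hs1, hsm, sub_zero]
    exact add_one_mul_sub_lt_one_of_lt_Lval (hs ⟨hℓ, hℓm.le⟩ ⟨by omega, hℓm⟩ ℓ.le_succ) hk
  have hcℓ : (c : ℕ) + 1 < ℓ := by rw [Fin.lt_def] at hc; dsimp only at hc; omega
  rcases lt_or_ge (s (ℓ + 1)) (s (c + 1)) with hlt | hge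
  · have hthreshold := add_one_mul_sub_le_of_lt_Lval (by omega) hcℓ hlt hk
    rw [upave_two, show m - (c + 1) + 1 = m - c by omega,
      show m - (c + 1) = m - 1 - c by omega] at hthreshold
    push_cast at hthreshold
    rw [hs1] at hthreshold ⊢
    linarith
  · have score_le_two {j : ℕ} (hj : 2 ≤ j) (hjm : j ≤ m) : s j ≤ s 2 :=
      hs ⟨one_le_two, hj.trans hjm⟩ ⟨by omega, hjm⟩ hj
    have hs12 : s 2 ≤ s 1 := hs ⟨le_rfl, by omega⟩ ⟨one_le_two, by omega⟩ one_le_two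
    calc (k + 1) * (s (c + 1) - s (ℓ + 1)) ≤ 0 :=
          mul_nonpos_of_nonneg_of_nonpos (by positivity) (sub_nonpos.mpr hge)
      _ ≤ h * (s 1 + s 2 - 2 * s (m - c)) + (s 1 - s (m - 1 - c)) := by
          have h1 := score_le_two (j := m - c) (by omega) (by omega)
          have h2 := score_le_two (j := m - 1 - c) (by omega) (by omega)
          exact add_nonneg (mul_nonneg h.cast_nonneg (by linarith)) (by linarith)
      _ = _ := (add_sub_assoc _ _ _).symm

/-- For any positional scoring rule with `s 1 ≠ s 2`, even `n` with
`n ≥ 2 s_2 / (1 − s_2)`: the rule is not `k`-augmentation strategyproof for any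
`k < max_{ℓ ∈ {1,…,m−1}} L_s(ℓ)`, and `Φ(F_s) ≥ max_ℓ L_s(ℓ)`. -/
theorem posRule_not_kASP_of_lt_Lval (m n : ℕ) [NeZero m] (hm : 3 ≤ m) (hn : 2 ≤ n)
    (s : ℕ → ℝ) (hs1 : s 1 = 1) (hsm : s m = 0)
    (hmono : ∀ j : ℕ, 1 ≤ j → j < m → s (j + 1) ≤ s j)
    (hs12 : s 1 ≠ s 2) (hneven : Even n) (hnbig : 2 * s 2 / (1 - s 2) ≤ (n : ℝ)) :
    (∀ k : ℕ,
        (k : ℝ) < (Finset.Icc 1 (m - 1)).sup' (Finset.nonempty_Icc.mpr (by omega))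
          (fun ℓ => Lval s n m ℓ) →
        ¬ kASP m n (posRule m s) k) ∧
    (∀ k : ℕ,
        (k : ℝ) < (Finset.Icc 1 (m - 1)).sup' (Finset.nonempty_Icc.mpr (by omega))
          (fun ℓ => Lval s n m ℓ) →
        (k : ℕ∞) < manipPot m n (posRule m s)) := by
  have hs : AntitoneOn s (Set.Icc 1 m) :=
    antitoneOn_of_add_one_le Set.ordConnected_Icc fun j _ hj hj' => hmono j hj.1 hj'.2
  have hs2 : s 2 < 1 := hs1 ▸ (hmono 1 le_rfl (by omega)).lt_of_ne hs12.symm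
  obtain ⟨h, rfl⟩ : ∃ h, n = h + h + 2 := by
    obtain ⟨r, rfl⟩ := hneven
    exact ⟨r - 1, by omega⟩
  have hbig : (h + 2) * s 2 ≤ h + 1 := by
    rw [div_le_iff₀ (sub_pos.mpr hs2)] at hnbig
    push_cast at hnbig
    linarith
  have not_kASP (k : ℕ) (hk : (k : ℝ) < (Icc 1 (m - 1)).sup' (nonempty_Icc.mpr (by omega))
      fun ℓ => Lval s (h + h + 2) m ℓ) : ¬ kASP m (h + h + 2) (posRule m s) k := by
    obtain ⟨ℓ, hℓ, hkℓ⟩ := (lt_sup'_iff _).mp hk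
    rw [mem_Icc] at hℓ
    exact not_kASP_posRule_of_lt_Lval hs1 hsm hs hbig hℓ.1 (by omega) hkℓ
  exact ⟨not_kASP, fun k hk => lt_manipPot_of_not_kASP (not_kASP k hk)⟩
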